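/- arXiv:2506.12463 — 2 statements merged into one kernel-verified Lean document; each statement's English description precedes it below -/
import Mathlib

section
/- Suppose W = 𝟙 cᵀ with uniform centralities c_j = 1/n for all j, let θ_i ∈ [0,1] for all i with Σ_j θ_j > 0, and let ω ∈ (0,1). Fix 1 ≤ K ≤ n and let S₁ ⊆ V be any K-element set consisting of indices of the K smallest stubbornness values, i.e., θ_i ≤ θ_j for every i ∈ S₁ and j ∉ S₁. Then S₁ maximizes the influencer's social power under the budget K: sp₀(S₁) ≥ sp₀(S) for every S ⊆ V with |S| ≤ K. -/
open Matrix Finset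

/-- `H(S) = (I - ω Σ_{j∈S} e_j e_jᵀ) (I - Θ) W`. -/
noncomputable def Hmat {n : ℕ} (W : Matrix (Fin n) (Fin n) ℝ) (θ : Fin n → ℝ) (ω : ℝ)
    (S : Finset (Fin n)) : Matrix (Fin n) (Fin n) ℝ :=
  (1 - Matrix.diagonal (fun i => if i ∈ S then ω else 0)) *
    ((1 - Matrix.diagonal θ) * W)

/-- `p₀(S) = (I - H(S))⁻¹ (I - Θ) ω Σ_{j∈S} e_j`. -/
noncomputable def p0vec {n : ℕ} (W : Matrix (Fin n) (Fin n) ℝ) (θ : Fin n → ℝ) (ω : ℝ)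
    (S : Finset (Fin n)) : Fin n → ℝ :=
  ((1 - Hmat W θ ω S)⁻¹ * (1 - Matrix.diagonal θ)).mulVec
    (fun j => if j ∈ S then ω else 0)

/-- The influencer's social power `sp₀(S) = (𝟙ᵀ p₀(S) + 1)/(n+1)`. -/
noncomputable def sp0 {n : ℕ} (W : Matrix (Fin n) (Fin n) ℝ) (θ : Fin n → ℝ) (ω : ℝ)
    (S : Finset (Fin n)) : ℝ :=
  ((∑ i, p0vec W θ ω S i) + 1) / (n + 1)

/-- The rank-one matrix `𝟙 cᵀ`. -/
def rankOne {n : ℕ} (c : Fin n → ℝ) : Matrix (Fin n) (Fin n) ℝ :=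
  Matrix.of fun _ j => c j

/-!
For `W = 𝟙 cᵀ` the matrix `I - H(S)` is the rank-one perturbation `I - u cᵀ` with
`u i = (1 - ω [i ∈ S]) (1 - θ i)`, and `cᵀ` is a left eigenvector of it with eigenvalue `1 - cᵀ u`.
If `∑ c j = 1`, this gives `cᵀ p₀(S) = x / (cᵀ θ + x)` with `x = ω ∑_{j ∈ S} c j (1 - θ j)`.
For uniform `c` the left side is the mean of `p₀(S)`, so the social power increases with `x`, and
`x` is largest on the least stubborn agents.
-/

section SumComparison

variable {ι κ M : Type*} [AddCommMonoid M] [PartialOrder M] [IsOrderedAddMonoid M]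

lemma sum_le_sum_of_card_le_of_forall_le {s : Finset ι} {t : Finset κ} {f : ι → M}
    {g : κ → M} (hcard : s.card ≤ t.card) (hg : ∀ j ∈ t, 0 ≤ g j)
    (hfg : ∀ i ∈ s, ∀ j ∈ t, f i ≤ g j) :
    ∑ i ∈ s, f i ≤ ∑ j ∈ t, g j := by
  obtain ⟨u, hut, hu⟩ := exists_subset_card_eq hcard
  let e : s ≃ u := equivOfCardEq hu.symm
  calc ∑ i ∈ s, f i = ∑ i : s, f i := (sum_coe_sort s f).symm
    _ ≤ ∑ i : s, g (e i) := sum_le_sum fun i _ => hfg i i.2 (e i) (hut (e i).2)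
    _ = ∑ j : u, g j := e.sum_comp fun j => g j
    _ = ∑ j ∈ u, g j := sum_coe_sort u g
    _ ≤ ∑ j ∈ t, g j := sum_le_sum_of_subset_of_nonneg hut fun j hj _ => hg j hj

lemma sum_le_sum_of_card_le_of_forall_notMem_le {s t : Finset ι} {f : ι → M}
    (hcard : s.card ≤ t.card) (hf : ∀ i ∈ t, 0 ≤ f i) (htop : ∀ i ∈ t, ∀ j ∉ t, f j ≤ f i) :
    ∑ i ∈ s, f i ≤ ∑ i ∈ t, f i := by
  classical
  have hsdiff : ∑ i ∈ s \ t, f i ≤ ∑ i ∈ t \ s, f i :=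
    sum_le_sum_of_card_le_of_forall_le (card_sdiff_le_card_sdiff_iff.2 hcard)
      (fun j hj => hf j (mem_sdiff.1 hj).1)
      fun i hi j hj => htop j (mem_sdiff.1 hj).1 i (mem_sdiff.1 hi).2
  calc ∑ i ∈ s, f i = ∑ i ∈ s ∩ t, f i + ∑ i ∈ s \ t, f i := (sum_inter_add_sum_sdiff s t f).symm
    _ ≤ ∑ i ∈ t ∩ s, f i + ∑ i ∈ t \ s, f i := by rw [inter_comm]; gcongr
    _ = ∑ i ∈ t, f i := sum_inter_add_sum_sdiff t s f

end SumComparison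

lemma monotoneOn_div_const_add {𝕜 : Type*} [Field 𝕜] [LinearOrder 𝕜] [IsStrictOrderedRing 𝕜]
    {a : 𝕜} (ha : 0 < a) : MonotoneOn (fun x => x / (a + x)) (Set.Ici 0) := by
  intro x hx y hy hxy
  rw [Set.mem_Ici] at hx hy
  rw [div_le_div_iff₀ (by positivity) (by positivity)]
  linarith [mul_le_mul_of_nonneg_right hxy ha.le]

section RankOnePerturbation

variable {m : Type*} [Fintype m] [DecidableEq m]

lemma det_one_sub_vecMulVec {R : Type*} [CommRing R] (u v : m → R) :
    (1 - vecMulVec u v).det = 1 - v ⬝ᵥ u := by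
  rw [sub_eq_add_neg, ← neg_vecMulVec, vecMulVec_eq Unit,
    det_one_add_replicateCol_mul_replicateRow, dotProduct_neg, ← sub_eq_add_neg]

lemma vecMul_one_sub_vecMulVec {R : Type*} [CommRing R] (u v : m → R) :
    v ᵥ* (1 - vecMulVec u v) = (1 - v ⬝ᵥ u) • v := by
  rw [vecMul_sub, vecMul_one, vecMul_vecMulVec, sub_smul, one_smul]

lemma dotProduct_inv_one_sub_vecMulVec_mulVec {𝕜 : Type*} [Field 𝕜] {u v : m → 𝕜}
    (huv : 1 - v ⬝ᵥ u ≠ 0) (b : m → 𝕜) :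
    v ⬝ᵥ ((1 - vecMulVec u v)⁻¹ *ᵥ b) = v ⬝ᵥ b / (1 - v ⬝ᵥ u) := by
  have hdet : IsUnit (1 - vecMulVec u v).det := by
    rwa [det_one_sub_vecMulVec, isUnit_iff_ne_zero]
  rw [eq_div_iff huv]
  calc v ⬝ᵥ ((1 - vecMulVec u v)⁻¹ *ᵥ b) * (1 - v ⬝ᵥ u)
      = (v ᵥ* (1 - vecMulVec u v)) ⬝ᵥ ((1 - vecMulVec u v)⁻¹ *ᵥ b) := by
        rw [vecMul_one_sub_vecMulVec, smul_dotProduct, smul_eq_mul, mul_comm]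
    _ = v ⬝ᵥ b := by
        rw [← dotProduct_mulVec, mulVec_mulVec, mul_nonsing_inv _ hdet, one_mulVec]

end RankOnePerturbation

/-- The quantity `ω ∑_{j ∈ S} c j (1 - θ j)`: the weight that the influencer receives directly
through its links to `S` in the `c`-weighted average of the opinions. -/
def directInfluence {n : ℕ} (c θ : Fin n → ℝ) (ω : ℝ) (S : Finset (Fin n)) : ℝ :=
  ω * ∑ j ∈ S, c j * (1 - θ j)

/-- The centrality vector giving each of the `n` agents the same weight `1 / n`. -/
noncomputable abbrev uniformCentrality (n : ℕ) : Fin n → ℝ :=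
  fun _ => 1 / n

section RankOneWeights

variable {n : ℕ} {c θ : Fin n → ℝ} {ω : ℝ} {S T : Finset (Fin n)}

lemma directInfluence_nonneg (hc : ∀ i ∈ S, 0 ≤ c i) (hθ : ∀ i ∈ S, θ i ≤ 1) (hω : 0 ≤ ω) :
    0 ≤ directInfluence c θ ω S :=
  mul_nonneg hω (sum_nonneg fun i hi => mul_nonneg (hc i hi) (sub_nonneg.2 (hθ i hi)))

lemma directInfluence_uniformCentrality_le (hθ : ∀ i ∈ T, θ i ≤ 1) (hω : 0 ≤ ω)
    (hcard : S.card ≤ T.card) (hbot : ∀ i ∈ T, ∀ j ∉ T, θ i ≤ θ j) :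
    directInfluence (uniformCentrality n) θ ω S ≤ directInfluence (uniformCentrality n) θ ω T := by
  refine mul_le_mul_of_nonneg_left (sum_le_sum_of_card_le_of_forall_notMem_le hcard ?_ ?_) hω
  · intro i hi
    exact mul_nonneg (by positivity) (sub_nonneg.2 (hθ i hi))
  · intro i hi j hj
    have := hbot i hi j hj
    gcongr

lemma Hmat_rankOne (c θ : Fin n → ℝ) (ω : ℝ) (S : Finset (Fin n)) :
    Hmat (rankOne c) θ ω S =
      vecMulVec (fun i => (1 - if i ∈ S then ω else 0) * (1 - θ i)) c := by
  ext i j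
  simp only [Hmat, rankOne, ← diagonal_one, diagonal_sub, diagonal_mul, of_apply, vecMulVec_apply,
    mul_assoc]

lemma dotProduct_one_sub_diagonal_mulVec_ite (c θ : Fin n → ℝ) (ω : ℝ) (S : Finset (Fin n)) :
    c ⬝ᵥ ((1 - diagonal θ) *ᵥ fun j => if j ∈ S then ω else 0) = directInfluence c θ ω S := by
  simp only [directInfluence, dotProduct, ← diagonal_one, diagonal_sub, mulVec_diagonal, mul_ite,
    mul_zero, sum_ite_mem, univ_inter, mul_sum]
  exact sum_congr rfl fun i _ => by ring

lemma one_sub_dotProduct_eq_dotProduct_add_directInfluence (hc : ∑ i, c i = 1) (θ : Fin n → ℝ)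
    (ω : ℝ) (S : Finset (Fin n)) :
    1 - c ⬝ᵥ (fun i => (1 - if i ∈ S then ω else 0) * (1 - θ i)) =
      c ⬝ᵥ θ + directInfluence c θ ω S := by
  have hterm : ∀ i, c i * ((1 - if i ∈ S then ω else 0) * (1 - θ i)) =
      c i - c i * θ i - if i ∈ S then ω * (c i * (1 - θ i)) else 0 := by
    intro i; split_ifs <;> ring
  simp only [dotProduct, hterm, sum_sub_distrib, hc, sum_ite_mem, univ_inter, directInfluence,
    mul_sum]
  ring

lemma dotProduct_p0vec_rankOne (hc : ∑ i, c i = 1)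
    (hne : c ⬝ᵥ θ + directInfluence c θ ω S ≠ 0) :
    c ⬝ᵥ p0vec (rankOne c) θ ω S =
      directInfluence c θ ω S / (c ⬝ᵥ θ + directInfluence c θ ω S) := by
  rw [← one_sub_dotProduct_eq_dotProduct_add_directInfluence hc] at hne ⊢
  rw [p0vec, Hmat_rankOne, ← mulVec_mulVec, dotProduct_inv_one_sub_vecMulVec_mulVec hne,
    dotProduct_one_sub_diagonal_mulVec_ite]

lemma sp0_rankOne_uniformCentrality [NeZero n]
    (hne : uniformCentrality n ⬝ᵥ θ + directInfluence (uniformCentrality n) θ ω S ≠ 0) :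
    sp0 (rankOne (uniformCentrality n)) θ ω S =
      (n * (directInfluence (uniformCentrality n) θ ω S /
        (uniformCentrality n ⬝ᵥ θ + directInfluence (uniformCentrality n) θ ω S)) + 1) /
          (n + 1) := by
  have hn : (n : ℝ) ≠ 0 := NeZero.ne _
  have hc : ∑ i, uniformCentrality n i = 1 := by simp [hn]
  rw [← dotProduct_p0vec_rankOne hc hne, sp0, dotProduct, ← mul_sum, one_div,
    mul_inv_cancel_left₀ hn]

end RankOneWeights

theorem rank_one_uniform_centrality_optimal_general {n : ℕ} {θ : Fin n → ℝ}
    (hθ : ∀ i, θ i ≤ 1) (hθsum : 0 < ∑ j, θ j) {ω : ℝ} (hω : 0 ≤ ω) {S T : Finset (Fin n)}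
    (hcard : S.card ≤ T.card) (hbot : ∀ i ∈ T, ∀ j ∉ T, θ i ≤ θ j) :
    sp0 (rankOne (uniformCentrality n)) θ ω S ≤ sp0 (rankOne (uniformCentrality n)) θ ω T := by
  have : NeZero n := ⟨by rintro rfl; simp at hθsum⟩
  have hmean : 0 < uniformCentrality n ⬝ᵥ θ := by
    rw [dotProduct, ← mul_sum]
    exact mul_pos (one_div_pos.2 (Nat.cast_pos.2 (NeZero.pos n))) hθsum
  have hnonneg (A : Finset (Fin n)) : 0 ≤ directInfluence (uniformCentrality n) θ ω A :=
    directInfluence_nonneg (fun _ _ => by positivity) (fun i _ => hθ i) hω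
  have hle := directInfluence_uniformCentrality_le (fun i _ => hθ i) hω hcard hbot
  rw [sp0_rankOne_uniformCentrality (add_pos_of_pos_of_nonneg hmean (hnonneg S)).ne',
    sp0_rankOne_uniformCentrality (add_pos_of_pos_of_nonneg hmean (hnonneg T)).ne']
  gcongr (_ * ?_ + _) / _
  exact monotoneOn_div_const_add hmean (hnonneg S) (hnonneg T) hle

/-- Rank-one weights with uniform centralities: picking the `K` least stubborn agents
maximizes the influencer's social power. -/
theorem rank_one_uniform_centrality_optimal
    (n : ℕ) (hn : 1 ≤ n)
    (θ : Fin n → ℝ) (hθ : ∀ i, θ i ∈ Set.Icc (0 : ℝ) 1) (hθsum : 0 < ∑ j, θ j)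
    (ω : ℝ) (hω : ω ∈ Set.Ioo (0 : ℝ) 1)
    (K : ℕ) (hK : 1 ≤ K) (hKn : K ≤ n)
    (S₁ : Finset (Fin n)) (hcard : S₁.card = K)
    (hbot : ∀ i ∈ S₁, ∀ j ∉ S₁, θ i ≤ θ j) :
    ∀ S : Finset (Fin n), S.card ≤ K →
      sp0 (rankOne (fun _ => 1 / n)) θ ω S ≤ sp0 (rankOne (fun _ => 1 / n)) θ ω S₁ := by
  intro S hS
  exact rank_one_uniform_centrality_optimal_general (fun i => (hθ i).2) hθsum hω.1.le
    (hcard ▸ hS) hbot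
end

section
/- Assume homogeneous stubbornness θ_i = θ ∈ (0,1) for all i ∈ V, ω ∈ (0,1), and let W be a symmetric circulant row-stochastic matrix: W = C(w₀, w₁, …, w_{n−1}) with w_k ≥ 0, Σ_k w_k = 1 and w_k = w_{n−k} for 1 ≤ k ≤ n−1. Then: (i) the matrix M = I − (1 − θ) W is invertible; (ii) its inverse is a symmetric circulant matrix, M^{-1} = C(m₀, m₁, …, m_{n−1}) with m_k = m_{n−k} for 1 ≤ k ≤ n−1; and (iii) if j* ∈ {2,…,n} minimizes m_{j−1} over j ∈ {2,…,n}, then the pair {1, j*} maximizes the influencer's social power under budget K = 2: sp₀({1, j*}) ≥ sp₀(S) for every S ⊆ V with |S| ≤ 2. -/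
open Matrix Finset

/-- The circulant matrix `C(m₀,…,m_{n-1})` whose `(i,j)` entry is `m_{(j-i) mod n}`. -/
def Cmat {n : ℕ} (m : Fin n → ℝ) : Matrix (Fin n) (Fin n) ℝ :=
  Matrix.of fun i j => m (j - i)

/-- `M = I - (1-θ) W` for a circulant weight generator `w`. -/
noncomputable def Mring (n : ℕ) (θ : ℝ) (w : Fin n → ℝ) : Matrix (Fin n) (Fin n) ℝ :=
  1 - (1 - θ) • Cmat w

/-!
Write `M = I - (1 - θ) W`. The vector `p = p₀(S)` satisfies `M p = q` with `q` supported on `S`,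
and since the columns of `W` sum to one, `θ ∑ p = ∑ q`. If the block of `M⁻¹` indexed by `S` has
constant row sums `r`, then `q` is constant on `S`, equal to `(1 - θ) ω / (1 - ω + ω r)`. When `W`
is a symmetric circulant, so is `M⁻¹`; hence a pair `{i, j}` has `r = m₀ + m_{j-i}` and a single
agent has `r = m₀`. So among pairs the best one minimizes `m_{j-i}`, and a pair beats a single agent
because `m_k ≤ m₀` for every `k`, by the minimum principle for `M`.
-/

/-- Entrywise nonnegative matrices all of whose row sums are less than one: the iteration matrices
`H(S)` are of this kind. -/
structure IsStrictlySubstochastic {ι R : Type*} [Fintype ι] [Semiring R] [PartialOrder R]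
    (H : Matrix ι ι R) : Prop where
  nonneg : ∀ i j, 0 ≤ H i j
  sum_row_lt_one : ∀ i, ∑ j, H i j < 1

namespace IsStrictlySubstochastic

section Ring

variable {ι R : Type*} [Fintype ι] [DecidableEq ι] [CommRing R] [LinearOrder R]
  [IsStrictOrderedRing R] {H : Matrix ι ι R}

theorem diagonal_mul_of_mem_rowStochastic {W : Matrix ι ι R} (hW : W ∈ rowStochastic R ι)
    {c : ι → R} (hc : ∀ i, c i ∈ Set.Ico 0 1) : IsStrictlySubstochastic (diagonal c * W) where
  nonneg i j := by
    rw [Matrix.diagonal_mul]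
    exact mul_nonneg (hc i).1 (nonneg_of_mem_rowStochastic hW)
  sum_row_lt_one i := by
    simp only [Matrix.diagonal_mul, ← mul_sum, sum_row_of_mem_rowStochastic hW, mul_one]
    exact (hc i).2

theorem one_sub_smul_of_mem_rowStochastic {W : Matrix ι ι R} (hW : W ∈ rowStochastic R ι) {θ : R}
    (hθ : θ ∈ Set.Ioc 0 1) : IsStrictlySubstochastic ((1 - θ) • W) := by
  rw [smul_eq_diagonal_mul]
  exact diagonal_mul_of_mem_rowStochastic hW fun _ ↦ ⟨sub_nonneg.2 hθ.2, sub_lt_self 1 hθ.1⟩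

/-- Minimum principle: `(1 - H) x` is negative wherever `x` attains a negative minimum, because the
row sums of `H` are below one. -/
theorem nonneg_of_nonneg_or_mulVec_nonneg (hH : IsStrictlySubstochastic H) {x : ι → R}
    (hx : ∀ i, 0 ≤ x i ∨ 0 ≤ ((1 - H) *ᵥ x) i) (k : ι) : 0 ≤ x k := by
  have : Nonempty ι := ⟨k⟩
  obtain ⟨i, hi⟩ := Finite.exists_min x
  refine le_trans ?_ (hi k)
  by_contra! hneg
  have hHx : (H *ᵥ x) i ≤ x i := by
    simpa [sub_mulVec] using (hx i).resolve_left hneg.not_ge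
  have hmin : (∑ j, H i j) * x i ≤ (H *ᵥ x) i := by
    rw [sum_mul]
    exact sum_le_sum fun j _ ↦ mul_le_mul_of_nonneg_left (hi j) (hH.nonneg i j)
  have hlt : x i < (∑ j, H i j) * x i := by
    simpa using mul_lt_mul_of_neg_right (hH.sum_row_lt_one i) hneg
  exact (hlt.trans_le (hmin.trans hHx)).false

end Ring

variable {ι R : Type*} [Fintype ι] [DecidableEq ι] [Field R] [LinearOrder R]
  [IsStrictOrderedRing R] {H : Matrix ι ι R}

theorem isUnit_one_sub (hH : IsStrictlySubstochastic H) : IsUnit (1 - H) := by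
  rw [← mulVec_injective_iff_isUnit]
  refine (injective_iff_map_eq_zero (1 - H).mulVecLin).2 fun x hx ↦ ?_
  have hx' : (1 - H) *ᵥ x = 0 := hx
  ext k
  apply le_antisymm
  · simpa using hH.nonneg_of_nonneg_or_mulVec_nonneg (x := -x) (by simp [mulVec_neg, hx']) k
  · exact hH.nonneg_of_nonneg_or_mulVec_nonneg (by simp [hx']) k

theorem one_sub_mulVec_inv_mulVec (hH : IsStrictlySubstochastic H) (x : ι → R) :
    (1 - H) *ᵥ (1 - H)⁻¹ *ᵥ x = x := by
  rw [mulVec_mulVec, mul_nonsing_inv _ ((isUnit_iff_isUnit_det _).1 hH.isUnit_one_sub),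
    one_mulVec]

theorem inv_mulVec_one_sub_mulVec (hH : IsStrictlySubstochastic H) (x : ι → R) :
    (1 - H)⁻¹ *ᵥ (1 - H) *ᵥ x = x := by
  rw [mulVec_mulVec, nonsing_inv_mul _ ((isUnit_iff_isUnit_det _).1 hH.isUnit_one_sub),
    one_mulVec]

theorem one_sub_mulVec_inv_col (hH : IsStrictlySubstochastic H) (k : ι) :
    (1 - H) *ᵥ ((1 - H)⁻¹).col k = Pi.single k 1 := by
  rw [← mulVec_single_one, hH.one_sub_mulVec_inv_mulVec]

theorem inv_one_sub_nonneg (hH : IsStrictlySubstochastic H) (i k : ι) :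
    0 ≤ (1 - H)⁻¹ i k := by
  have hsingle : (0 : ι → R) ≤ Pi.single k 1 := Pi.single_nonneg.2 zero_le_one
  exact hH.nonneg_of_nonneg_or_mulVec_nonneg (x := ((1 - H)⁻¹).col k)
    (fun j ↦ Or.inr (hH.one_sub_mulVec_inv_col k ▸ hsingle j)) i

theorem inv_one_sub_le_diag (hH : IsStrictlySubstochastic H) (i k : ι) :
    (1 - H)⁻¹ i k ≤ (1 - H)⁻¹ k k := by
  set x := ((1 - H)⁻¹).col k with hx
  -- The gap to the diagonal entry vanishes at `k`, and off `k` its image under `1 - H` is the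
  -- constant `x k ≥ 0` times one minus a row sum of `H`.
  have hgap : ∀ j, 0 ≤ (x k • 1 - x) j ∨ 0 ≤ ((1 - H) *ᵥ (x k • 1 - x)) j := by
    intro j
    by_cases hjk : j = k
    · left
      simp [hjk]
    · right
      have hH1 : (H *ᵥ 1) j ≤ 1 := by
        simpa [mulVec, dotProduct] using (hH.sum_row_lt_one j).le
      rw [mulVec_sub, mulVec_smul, hx, hH.one_sub_mulVec_inv_col]
      simpa [sub_mulVec, hjk] using mul_nonneg (hH.inv_one_sub_nonneg k k) (sub_nonneg.2 hH1)
  simpa [hx] using hH.nonneg_of_nonneg_or_mulVec_nonneg hgap i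

end IsStrictlySubstochastic

theorem mem_doublyStochastic_of_isSymm {ι R : Type*} [Fintype ι] [DecidableEq ι] [Semiring R]
    [PartialOrder R] [IsOrderedRing R] {W : Matrix ι ι R} (hsymm : W.IsSymm)
    (hW : W ∈ rowStochastic R ι) : W ∈ doublyStochastic R ι :=
  mem_doublyStochastic_iff_mem_rowStochastic_and_mem_colStochastic.2
    ⟨hW, transpose_mem_rowStochastic_iff_mem_colStochastic.1 (hsymm.eq.symm ▸ hW)⟩

theorem sum_one_sub_smul_mulVec {ι R : Type*} [Fintype ι] [DecidableEq ι] [CommRing R]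
    [PartialOrder R] [IsOrderedRing R] {W : Matrix ι ι R} (hW : W ∈ colStochastic R ι) (θ : R)
    (x : ι → R) : ∑ i, ((1 - (1 - θ) • W) *ᵥ x) i = θ * ∑ i, x i := by
  simp only [sub_mulVec, one_mulVec, smul_mulVec, Pi.sub_apply, Pi.smul_apply, smul_eq_mul,
    sum_sub_distrib, ← mul_sum, sum_mulVec_of_mem_colStochastic hW]
  ring

section SocialPower

variable {n : ℕ} {W : Matrix (Fin n) (Fin n) ℝ} {S : Finset (Fin n)}

theorem Hmat_eq_diagonal_mul (W : Matrix (Fin n) (Fin n) ℝ) (θ : Fin n → ℝ) (ω : ℝ)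
    (S : Finset (Fin n)) :
    Hmat W θ ω S = diagonal (fun i ↦ (1 - if i ∈ S then ω else 0) * (1 - θ i)) * W := by
  rw [Hmat, ← Matrix.mul_assoc]
  simp only [← diagonal_one, diagonal_sub, diagonal_mul_diagonal]

theorem isStrictlySubstochastic_Hmat (hW : W ∈ rowStochastic ℝ (Fin n)) {θ : Fin n → ℝ}
    (hθ : ∀ i, θ i ∈ Set.Ioc 0 1) {ω : ℝ} (hω : ω ∈ Set.Icc 0 1) (S : Finset (Fin n)) :
    IsStrictlySubstochastic (Hmat W θ ω S) := by
  rw [Hmat_eq_diagonal_mul]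
  refine .diagonal_mul_of_mem_rowStochastic hW fun i ↦ ?_
  obtain ⟨hθ0, hθ1⟩ := hθ i
  obtain ⟨hω0, hω1⟩ := hω
  split_ifs <;> constructor <;> nlinarith

theorem p0vec_eq_of_fixed_point (hW : W ∈ rowStochastic ℝ (Fin n)) {θ : Fin n → ℝ}
    (hθ : ∀ i, θ i ∈ Set.Ioc 0 1) {ω : ℝ} (hω : ω ∈ Set.Icc 0 1) {p : Fin n → ℝ}
    (hp : ∀ i, p i = (1 - if i ∈ S then ω else 0) * (1 - θ i) * (W *ᵥ p) i
      + (1 - θ i) * if i ∈ S then ω else 0) :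
    p0vec W θ ω S = p := by
  have hsolve : (1 - Hmat W θ ω S) *ᵥ p
      = (1 - diagonal θ) *ᵥ fun j ↦ if j ∈ S then ω else 0 := by
    ext i
    rw [sub_mulVec, sub_mulVec, one_mulVec, one_mulVec, Hmat_eq_diagonal_mul, ← mulVec_mulVec]
    simp only [Pi.sub_apply, mulVec_diagonal]
    linarith [hp i]
  rw [p0vec, ← mulVec_mulVec, ← hsolve,
    (isStrictlySubstochastic_Hmat hW hθ hω S).inv_mulVec_one_sub_mulVec]

/-- The common value on the targets of `q = (I - (1 - θ) W) p₀(S)`, when the block of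
`(I - (1 - θ) W)⁻¹` indexed by the target set `S` has constant row sums `r`. -/
noncomputable def linkGain (θ ω r : ℝ) : ℝ :=
  (1 - θ) * ω / (1 - ω + ω * r)

variable {θ ω : ℝ}

theorem linkGain_nonneg (hθ : θ ≤ 1) (hω : ω ∈ Set.Icc 0 1) {r : ℝ} (hr : 0 ≤ r) :
    0 ≤ linkGain θ ω r :=
  div_nonneg (mul_nonneg (sub_nonneg.2 hθ) hω.1)
    (add_nonneg (sub_nonneg.2 hω.2) (mul_nonneg hω.1 hr))

theorem one_sub_add_mul_pos (hω : ω ∈ Set.Ico 0 1) {r : ℝ} (hr : 0 ≤ r) :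
    0 < 1 - ω + ω * r :=
  add_pos_of_pos_of_nonneg (sub_pos.2 hω.2) (mul_nonneg hω.1 hr)

theorem linkGain_le_linkGain (hθ : θ ≤ 1) (hω : ω ∈ Set.Ico 0 1) {r s : ℝ} (hr : 0 ≤ r)
    (hrs : r ≤ s) : linkGain θ ω s ≤ linkGain θ ω r :=
  div_le_div_of_nonneg_left (mul_nonneg (sub_nonneg.2 hθ) hω.1) (one_sub_add_mul_pos hω hr)
    (by gcongr; exact hω.1)

theorem linkGain_le_two_mul_linkGain_add (hθ : θ ≤ 1) (hω : ω ∈ Set.Ico 0 1) {d e : ℝ}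
    (he : 0 ≤ e) (hed : e ≤ d) : linkGain θ ω d ≤ 2 * linkGain θ ω (d + e) := by
  have hd : 0 ≤ d := he.trans hed
  have hden : 1 - ω + ω * (d + e) ≤ 2 * (1 - ω + ω * d) := by
    linarith [hω.2, mul_le_mul_of_nonneg_left hed hω.1]
  have hnum : 0 ≤ (1 - θ) * ω := mul_nonneg (sub_nonneg.2 hθ) hω.1
  rw [linkGain, linkGain, ← mul_div_assoc,
    div_le_div_iff₀ (one_sub_add_mul_pos hω hd) (one_sub_add_mul_pos hω (add_nonneg hd he))]
  linarith [mul_le_mul_of_nonneg_left hden hnum]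

theorem sp0_eq_of_sum_row_inv_eq (hW : W ∈ doublyStochastic ℝ (Fin n)) (hθ : θ ∈ Set.Ioc 0 1)
    (hω : ω ∈ Set.Icc 0 1) {r : ℝ} (hr : ∀ i ∈ S, ∑ j ∈ S, (1 - (1 - θ) • W)⁻¹ i j = r)
    (hne : 1 - ω + ω * r ≠ 0) :
    sp0 W (fun _ ↦ θ) ω S = (#S * linkGain θ ω r / θ + 1) / (n + 1) := by
  obtain ⟨hWrow, hWcol⟩ :=
    mem_doublyStochastic_iff_mem_rowStochastic_and_mem_colStochastic.1 hW
  set q : Fin n → ℝ := fun i ↦ if i ∈ S then linkGain θ ω r else 0 with hq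
  set p := (1 - (1 - θ) • W)⁻¹ *ᵥ q with hp
  have hMp : (1 - (1 - θ) • W) *ᵥ p = q :=
    (IsStrictlySubstochastic.one_sub_smul_of_mem_rowStochastic hWrow hθ).one_sub_mulVec_inv_mulVec q
  have hWp (i : Fin n) : (1 - θ) * (W *ᵥ p) i = p i - q i := by
    simp [← hMp, sub_mulVec, smul_mulVec]
  have hpS (i : Fin n) (hi : i ∈ S) : p i = r * linkGain θ ω r := by
    simp [hp, hq, mulVec, dotProduct, ← sum_mul, hr i hi]
  have hgain : (1 - ω + ω * r) * linkGain θ ω r = (1 - θ) * ω := mul_div_cancel₀ _ hne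
  have hfixed : p0vec W (fun _ ↦ θ) ω S = p := by
    refine p0vec_eq_of_fixed_point hWrow (fun _ ↦ hθ) hω fun i ↦ ?_
    rw [mul_assoc, hWp]
    by_cases hi : i ∈ S
    · simp only [hq, hi, if_true, hpS i hi]
      linarith
    · simp [hq, hi]
  have hsum : #S * linkGain θ ω r = θ * ∑ i, p i := by
    rw [← sum_one_sub_smul_mulVec hWcol, hMp]
    simp [hq]
  rw [sp0, hfixed, hsum, mul_div_cancel_left₀ _ hθ.1.ne']

variable {d : ℝ}

theorem sp0_of_card_le_one (hW : W ∈ doublyStochastic ℝ (Fin n)) (hθ : θ ∈ Set.Ioc 0 1)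
    (hω : ω ∈ Set.Ico 0 1) (hd : 0 ≤ d) (hdiag : ∀ i, (1 - (1 - θ) • W)⁻¹ i i = d)
    (hS : #S ≤ 1) :
    sp0 W (fun _ ↦ θ) ω S = (#S * linkGain θ ω d / θ + 1) / (n + 1) := by
  refine sp0_eq_of_sum_row_inv_eq hW hθ (Set.Ico_subset_Icc_self hω) (fun i hi ↦ ?_)
    (one_sub_add_mul_pos hω hd).ne'
  obtain rfl : S = {i} := eq_singleton_iff_unique_mem.2 ⟨hi, fun j hj ↦ card_le_one.1 hS j hj i hi⟩
  rw [sum_singleton, hdiag]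

theorem sp0_pair (hW : W ∈ rowStochastic ℝ (Fin n)) (hsymm : W.IsSymm)
    (hθ : θ ∈ Set.Ioc 0 1) (hω : ω ∈ Set.Ico 0 1) (hdiag : ∀ i, (1 - (1 - θ) • W)⁻¹ i i = d)
    {i j : Fin n} (hij : i ≠ j) :
    sp0 W (fun _ ↦ θ) ω {i, j}
      = (2 * linkGain θ ω (d + (1 - (1 - θ) • W)⁻¹ i j) / θ + 1) / (n + 1) := by
  have hH := IsStrictlySubstochastic.one_sub_smul_of_mem_rowStochastic hW hθ
  have hr : 0 ≤ d + (1 - (1 - θ) • W)⁻¹ i j :=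
    add_nonneg (hdiag i ▸ hH.inv_one_sub_nonneg i i) (hH.inv_one_sub_nonneg i j)
  have hinv : (1 - (1 - θ) • W)⁻¹.IsSymm := (isSymm_one.sub (hsymm.smul _)).inv
  rw [sp0_eq_of_sum_row_inv_eq (mem_doublyStochastic_of_isSymm hsymm hW) hθ
    (Set.Ico_subset_Icc_self hω) (fun k hk ↦ ?_) (one_sub_add_mul_pos hω hr).ne',
    card_pair hij, Nat.cast_two]
  rw [sum_pair hij]
  rcases mem_insert.1 hk with rfl | hk
  · rw [hdiag]
  · rw [mem_singleton.1 hk, hdiag, hinv.apply, add_comm]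

theorem sp0_le_sp0_pair (hW : W ∈ rowStochastic ℝ (Fin n)) (hsymm : W.IsSymm)
    (hθ : θ ∈ Set.Ioc 0 1) (hω : ω ∈ Set.Ico 0 1) (hdiag : ∀ i, (1 - (1 - θ) • W)⁻¹ i i = d)
    {i j : Fin n} (hij : i ≠ j)
    (hmin : ∀ k l, k ≠ l → (1 - (1 - θ) • W)⁻¹ i j ≤ (1 - (1 - θ) • W)⁻¹ k l) (hS : #S ≤ 2) :
    sp0 W (fun _ ↦ θ) ω S ≤ sp0 W (fun _ ↦ θ) ω {i, j} := by
  have hH := IsStrictlySubstochastic.one_sub_smul_of_mem_rowStochastic hW hθ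
  have hd : 0 ≤ d := hdiag i ▸ hH.inv_one_sub_nonneg i i
  have he := hH.inv_one_sub_nonneg i j
  have hθ0 := hθ.1.le
  rw [sp0_pair hW hsymm hθ hω hdiag hij]
  rcases hS.lt_or_eq with hS | hS
  · have hS1 : #S ≤ 1 := Nat.le_of_lt_succ hS
    have hgain : #S * linkGain θ ω d ≤ 2 * linkGain θ ω (d + (1 - (1 - θ) • W)⁻¹ i j) :=
      calc #S * linkGain θ ω d
          ≤ 1 * linkGain θ ω d := mul_le_mul_of_nonneg_right (mod_cast hS1)
            (linkGain_nonneg hθ.2 (Set.Ico_subset_Icc_self hω) hd)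
        _ = linkGain θ ω d := one_mul _
        _ ≤ _ := linkGain_le_two_mul_linkGain_add hθ.2 hω he
            (hdiag j ▸ hH.inv_one_sub_le_diag i j)
    rw [sp0_of_card_le_one (mem_doublyStochastic_of_isSymm hsymm hW) hθ hω hd hdiag hS1]
    gcongr
  · obtain ⟨k, l, hkl, rfl⟩ := card_eq_two.1 hS
    rw [sp0_pair hW hsymm hθ hω hdiag hkl]
    have hgain := linkGain_le_linkGain hθ.2 hω (add_nonneg hd he)
      (add_le_add_right (hmin k l hkl) d)
    gcongr

end SocialPower

theorem inv_circulant {G R : Type*} [AddGroup G] [Fintype G] [DecidableEq G] [CommRing R]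
    (v : G → R) : (circulant v)⁻¹ = circulant fun g ↦ (circulant v)⁻¹ g 0 := by
  ext i j
  have hshift : (circulant v).submatrix (Equiv.addRight j) (Equiv.addRight j) = circulant v := by
    ext
    simp
  have hinv := inv_submatrix_equiv (circulant v) (Equiv.addRight j) (Equiv.addRight j)
  rw [hshift] at hinv
  simpa using (congr_fun₂ hinv (i - j) 0).symm

section Circulant

variable {n : ℕ}

theorem Cmat_eq_transpose_circulant (m : Fin n → ℝ) : Cmat m = (circulant m)ᵀ :=
  rfl

theorem Cmat_isSymm_iff {m : Fin n → ℝ} : (Cmat m).IsSymm ↔ ∀ k, m (-k) = m k := by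
  rw [Cmat_eq_transpose_circulant, isSymm_transpose_iff, Fin.circulant_isSymm_iff]

theorem isSymm_inv_Mring (θ : ℝ) {w : Fin n → ℝ} (hwsym : ∀ k, w (-k) = w k) :
    (Mring n θ w)⁻¹.IsSymm :=
  (isSymm_one.sub ((Cmat_isSymm_iff.2 hwsym).smul _)).inv

variable [NeZero n]

theorem inv_Cmat (m : Fin n → ℝ) : (Cmat m)⁻¹ = Cmat ((Cmat m)⁻¹ 0) := by
  simp only [Cmat_eq_transpose_circulant, ← transpose_nonsing_inv]
  rw [inv_circulant m]
  ext
  simp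

theorem Cmat_mem_rowStochastic {w : Fin n → ℝ} (hw0 : ∀ k, 0 ≤ w k) (hw1 : ∑ k, w k = 1) :
    Cmat w ∈ rowStochastic ℝ (Fin n) :=
  mem_rowStochastic_iff_sum.2
    ⟨fun _ _ ↦ hw0 _, fun i ↦ (Equiv.sum_comp (Equiv.subRight i) w).trans hw1⟩

theorem Mring_eq_Cmat (θ : ℝ) (w : Fin n → ℝ) :
    Mring n θ w = Cmat (Pi.single 0 1 - (1 - θ) • w) := by
  ext i j
  simp [Mring, Cmat, one_apply, Pi.single_apply, sub_eq_zero, eq_comm]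

theorem inv_Mring_eq_Cmat (θ : ℝ) (w : Fin n → ℝ) :
    (Mring n θ w)⁻¹ = Cmat ((Mring n θ w)⁻¹ 0) := by
  rw [Mring_eq_Cmat]
  exact inv_Cmat _

theorem inv_Mring_apply (θ : ℝ) (w : Fin n → ℝ) (i j : Fin n) :
    (Mring n θ w)⁻¹ i j = (Mring n θ w)⁻¹ 0 (j - i) :=
  congr_fun₂ (inv_Mring_eq_Cmat θ w) i j

theorem inv_Mring_zero_neg (θ : ℝ) {w : Fin n → ℝ} (hwsym : ∀ k, w (-k) = w k) (k : Fin n) :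
    (Mring n θ w)⁻¹ 0 (-k) = (Mring n θ w)⁻¹ 0 k :=
  Cmat_isSymm_iff.1 (inv_Mring_eq_Cmat θ w ▸ isSymm_inv_Mring θ hwsym) k

end Circulant

/-- Symmetric circulant weights: `M = I - (1-θ)W` is invertible with symmetric circulant
inverse, and the pair `{first agent, agent minimizing m_{j-1}}` is optimal for `K = 2`. -/
theorem ring_graph_two_link_optimal
    (n : ℕ) (hn : 2 ≤ n) (w : Fin n → ℝ)
    (hw0 : ∀ k, 0 ≤ w k) (hw1 : ∑ k, w k = 1) (hwsym : ∀ k, w (-k) = w k)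
    (θ : ℝ) (hθ : θ ∈ Set.Ioo (0 : ℝ) 1) (ω : ℝ) (hω : ω ∈ Set.Ioo (0 : ℝ) 1)
    (jstar : Fin n) (hjs : jstar ≠ ⟨0, by omega⟩)
    (hmin : ∀ j : Fin n, j ≠ ⟨0, by omega⟩ →
      (Mring n θ w)⁻¹ ⟨0, by omega⟩ jstar ≤ (Mring n θ w)⁻¹ ⟨0, by omega⟩ j) :
    IsUnit (Mring n θ w) ∧
    (Mring n θ w)⁻¹ = Cmat (fun k => (Mring n θ w)⁻¹ ⟨0, by omega⟩ k) ∧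
    (∀ k : Fin n, (Mring n θ w)⁻¹ ⟨0, by omega⟩ (-k) = (Mring n θ w)⁻¹ ⟨0, by omega⟩ k) ∧
    (∀ S : Finset (Fin n), S.card ≤ 2 →
      sp0 (Cmat w) (fun _ => θ) ω S
        ≤ sp0 (Cmat w) (fun _ => θ) ω {⟨0, by omega⟩, jstar}) := by
  have : NeZero n := ⟨by omega⟩
  have hzero : (⟨0, by omega⟩ : Fin n) = 0 := rfl
  simp only [hzero] at hjs hmin ⊢
  have hW := Cmat_mem_rowStochastic hw0 hw1
  have hθ' := Set.Ioo_subset_Ioc_self hθ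
  have hdiag (i : Fin n) : (Mring n θ w)⁻¹ i i = (Mring n θ w)⁻¹ 0 0 := by
    rw [inv_Mring_apply, sub_self]
  have hmin_pair (k l : Fin n) (hkl : k ≠ l) :
      (Mring n θ w)⁻¹ 0 jstar ≤ (Mring n θ w)⁻¹ k l := by
    rw [inv_Mring_apply θ w k l]
    exact hmin (l - k) (sub_ne_zero.2 hkl.symm)
  have hunit : IsUnit (Mring n θ w) :=
    (IsStrictlySubstochastic.one_sub_smul_of_mem_rowStochastic hW hθ').isUnit_one_sub
  exact ⟨hunit, inv_Mring_eq_Cmat θ w, inv_Mring_zero_neg θ hwsym,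
    fun S hS ↦ sp0_le_sp0_pair hW (Cmat_isSymm_iff.2 hwsym) hθ'
      (Set.Ioo_subset_Ico_self hω) hdiag hjs.symm hmin_pair hS⟩
end
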